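/- arXiv:math/0607563 — 8 statements merged into one kernel-verified Lean document; each statement's English description precedes it below -/
import Mathlib

section
/- Let k ≥ 1 and n be natural numbers, A : Matrix (Fin n) (Fin n) (ZMod k), v : Fin n → ZMod k, and i : Fin n. Then ((A^j).mulVec v) i is a unit of ZMod k for every natural number j if and only if ((A^j).mulVec v) i is a unit of ZMod k for every j ≤ k^n. -/
/-- The infinite family of unit conditions on the coefficients
`((A ^ j).mulVec v) i` reduces to a finite check up to `k ^ n`. -/
theorem isUnit_matrix_pow_mulVec_iff_finite_check
    (k n : ℕ) (hk : 1 ≤ k)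
    (A : Matrix (Fin n) (Fin n) (ZMod k)) (v : Fin n → ZMod k) (i : Fin n) :
    (∀ j : ℕ, IsUnit (((A ^ j).mulVec v) i)) ↔
      (∀ j ≤ k ^ n, IsUnit (((A ^ j).mulVec v) i)) := by
  refine ⟨fun h j _ => h j, fun h => ?_⟩
  haveI : NeZero k := ⟨by omega⟩
  obtain ⟨a, b, hab, hb, he⟩ : ∃ a b : ℕ, a < b ∧ b ≤ k ^ n ∧
      (A ^ a).mulVec v = (A ^ b).mulVec v := by
    obtain ⟨x, y, hxy, he⟩ := Fintype.exists_ne_map_eq_of_card_lt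
      (fun j : Fin (k ^ n + 1) => (A ^ (j : ℕ)).mulVec v) (by simp [ZMod.card])
    have hne : (x : ℕ) ≠ y := fun h => hxy (Fin.ext h)
    rcases lt_or_gt_of_ne hne with h1 | h1
    · exact ⟨x, y, h1, by omega, he⟩
    · exact ⟨y, x, h1, by omega, he.symm⟩
  intro j
  induction j using Nat.strong_induction_on with
  | _ j ih =>
    by_cases hj : j ≤ k ^ n
    · exact h j hj
    · have e : (A ^ j).mulVec v = (A ^ (j - b + a)).mulVec v := by
        rw [pow_add, ← Matrix.mulVec_mulVec, he, Matrix.mulVec_mulVec, ← pow_add]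
        congr 2
        omega
      rw [e]
      exact ih _ (by omega)
end

section
/- Let K be a field, N a natural number, M : Matrix (Fin N) (Fin N) K, v : Fin N → K, and f : (Fin N → K) →ₗ[K] K a linear functional. Then f ((M^j).mulVec v) = 0 for every natural number j if and only if f ((M^j).mulVec v) = 0 for every j < N. -/
/-- A linear functional vanishes on the whole orbit `(M ^ j).mulVec v`
if and only if it vanishes on the first `N` terms. -/
theorem linear_functional_vanishes_on_orbit_iff
    (K : Type*) [Field K] (N : ℕ)
    (M : Matrix (Fin N) (Fin N) K) (v : Fin N → K)
    (f : (Fin N → K) →ₗ[K] K) :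
    (∀ j : ℕ, f ((M ^ j).mulVec v) = 0) ↔
      (∀ j < N, f ((M ^ j).mulVec v) = 0) := by
  refine ⟨fun h j _ => h j, fun h j => ?_⟩
  have hdeg : (Polynomial.X ^ j %ₘ M.charpoly).degree < (N : WithBot ℕ) := by
    have h1 := Polynomial.degree_modByMonic_lt (Polynomial.X ^ j) M.charpoly_monic
    rwa [Matrix.charpoly_degree_eq_dim, Fintype.card_fin] at h1
  rw [Matrix.pow_eq_aeval_mod_charpoly M j, Polynomial.aeval_def, Polynomial.eval₂_eq_sum,
    Polynomial.sum_def, Matrix.sum_mulVec, map_sum]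
  refine Finset.sum_eq_zero fun i hi => ?_
  have hi' : i < N := by
    have h2 := lt_of_le_of_lt (Polynomial.le_degree_of_mem_supp i hi) hdeg
    exact_mod_cast h2
  rw [← Algebra.smul_def, Matrix.smul_mulVec, map_smul, h i hi', smul_zero]
end

section
/- Let k ≥ 1. Let act : (List (ZMod k) → ZMod k) → List (ZMod k) → List (ZMod k) be the unique function satisfying act c [] = [] and act c (a :: u) = (a + c []) :: act (fun w => c (a :: w)) u for all c, a, u; this is the action on the rooted k-ary tree of the element of the infinite iterated wreath product ℤ/kℤ ≀ ℤ/kℤ ≀ ⋯ with portrait c. Then for every portrait c : List (ZMod k) → ZMod k, the map act c is spherically transitive — i.e. for every n and all lists u, v over ZMod k of length n there exists m : ℕ with (act c)^[m] u = v — if and only if for every n : ℕ the sum over all words w : Fin n → ZMod k of c (List.ofFn w) is a unit of the ring ZMod k. -/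
open Finset in
theorem sph_orbit_sum {α M : Type*} [AddCommMonoid M] [DecidableEq α] (T : α → α) (s : Finset α)
    (hs : ∀ x ∈ s, T x ∈ s) (ht : ∀ x ∈ s, ∀ y ∈ s, ∃ m : ℕ, T^[m] x = y) (f : α → M)
    (x : α) (hx : x ∈ s) :
    ∑ i ∈ range (Function.minimalPeriod T x), f (T^[i] x) = ∑ y ∈ s, f y := by
  have hmem : ∀ i, T^[i] x ∈ s := by
    intro i
    induction i with
    | zero => simpa using hx
    | succ i ih => rw [Function.iterate_succ_apply']; exact hs _ ih
  have hper : 0 < Function.minimalPeriod T x := by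
    obtain ⟨m, hm⟩ := ht _ (hs x hx) x hx
    refine Function.IsPeriodicPt.minimalPeriod_pos (n := m + 1) (Nat.succ_pos m) ?_
    exact hm
  refine Finset.sum_bij (fun i _ => T^[i] x) (fun i _ => hmem i) ?_ ?_ (fun _ _ => rfl)
  · intro i hi j hj h
    exact Function.iterate_injOn_Iio_minimalPeriod (by simpa using hi) (by simpa using hj) h
  · intro y hy
    obtain ⟨m, hm⟩ := ht x hx y hy
    refine ⟨m % Function.minimalPeriod T x, by simpa using Nat.mod_lt _ hper, ?_⟩
    rw [Function.iterate_mod_minimalPeriod_eq, hm]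

open Finset in
theorem sph_mul_sum {α M : Type*} [AddCommMonoid M] (T : α → α) (f : α → M)
    (x : α) (p : ℕ) (hp : T^[p] x = x) (q : ℕ) :
    T^[p * q] x = x ∧
    ∑ i ∈ range (p * q), f (T^[i] x) = q • ∑ i ∈ range p, f (T^[i] x) := by
  induction q with
  | zero => simp
  | succ q ih =>
    obtain ⟨h1, h2⟩ := ih
    refine ⟨?_, ?_⟩
    · rw [Nat.mul_succ, Nat.add_comm, Function.iterate_add_apply, h1, hp]
    · rw [Nat.mul_succ, Finset.sum_range_add, h2, succ_nsmul]
      congr 1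
      refine Finset.sum_congr rfl fun i _ => ?_
      rw [Nat.add_comm, Function.iterate_add_apply, h1]

/-- An element of the infinite iterated wreath product `ℤ/kℤ ≀ ℤ/kℤ ≀ ⋯`
given by its portrait `c` is spherically transitive if and only if all its
level sums are units of `ZMod k`. -/
theorem spherically_transitive_iff_level_sums_unit
    (k : ℕ) [NeZero k]
    (act : (List (ZMod k) → ZMod k) → List (ZMod k) → List (ZMod k))
    (hnil : ∀ c, act c [] = [])
    (hcons : ∀ c a u, act c (a :: u) = (a + c []) :: act (fun w => c (a :: w)) u)
    (c : List (ZMod k) → ZMod k) :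
    (∀ (n : ℕ) (u v : List (ZMod k)), u.length = n → v.length = n →
        ∃ m : ℕ, (act c)^[m] u = v) ↔
      (∀ n : ℕ, IsUnit (∑ w : Fin n → ZMod k, c (List.ofFn w))) := by
  have hlen : ∀ (u : List (ZMod k)) c, (act c u).length = u.length := by
    intro u
    induction u with
    | nil => intro c; rw [hnil]
    | cons a u ih => intro c; rw [hcons]; simp [ih]
  have happ : ∀ (u : List (ZMod k)) (x : ZMod k) c, act c (u ++ [x]) = act c u ++ [x + c u] := by
    intro u x
    induction u with
    | nil => intro c; simp [hcons, hnil]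
    | cons a u ih => intro c; rw [List.cons_append, hcons, ih, hcons]; simp
  have hit : ∀ (u : List (ZMod k)) (x : ZMod k) (m : ℕ), (act c)^[m] (u ++ [x]) =
      (act c)^[m] u ++ [x + ∑ i ∈ Finset.range m, c ((act c)^[i] u)] := by
    intro u x m
    induction m with
    | zero => simp
    | succ m ih =>
      rw [Function.iterate_succ_apply', ih, happ, Function.iterate_succ_apply',
        Finset.sum_range_succ, add_assoc]
  have hsum : ∀ n, (∀ (u v : List (ZMod k)), u.length = n → v.length = n →
        ∃ m : ℕ, (act c)^[m] u = v) → ∀ u : List (ZMod k), u.length = n →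
      ∑ i ∈ Finset.range (Function.minimalPeriod (act c) u), c ((act c)^[i] u) =
        ∑ w : Fin n → ZMod k, c (List.ofFn w) := by
    intro n ht u hu
    have hmem : ∀ v : List (ZMod k),
        v ∈ (Finset.univ : Finset (Fin n → ZMod k)).image List.ofFn ↔ v.length = n := by
      intro v
      simp only [Finset.mem_image, Finset.mem_univ, true_and]
      constructor
      · rintro ⟨w, rfl⟩; simp
      · rintro rfl; exact ⟨v.get, List.ofFn_get v⟩
    rw [sph_orbit_sum (act c) (Finset.univ.image (List.ofFn (n := n))) _ _ c u ((hmem u).2 hu),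
      Finset.sum_image]
    · intro a _ b _ h; exact List.ofFn_injective h
    · intro x hx; rw [hmem] at *; rw [hlen, hx]
    · intro x hx y hy; rw [hmem] at hx hy; exact ht x y hx hy
  constructor
  · intro h n
    let u : List (ZMod k) := List.replicate n 0
    have hu : u.length = n := by simp [u]
    obtain ⟨m, hm⟩ := h (n + 1) (u ++ [0]) (u ++ [1]) (by simp [hu]) (by simp [hu])
    rw [hit] at hm
    obtain ⟨h1, h2⟩ := List.append_inj' hm rfl
    obtain ⟨q, rfl⟩ := Function.IsPeriodicPt.minimalPeriod_dvd (f := act c) h1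
    rw [(sph_mul_sum (act c) c u _ (Function.iterate_minimalPeriod) q).2,
      hsum n (h n) u hu] at h2
    simp only [zero_add, List.cons.injEq, and_true, nsmul_eq_mul] at h2
    exact IsUnit.of_mul_eq_one _ (by rw [mul_comm]; exact h2)
  · intro h n
    induction n with
    | zero =>
      intro u v hu hv
      rw [List.length_eq_zero_iff] at hu hv
      exact ⟨0, by simp [hu, hv]⟩
    | succ n ih =>
      intro u v hu hv
      obtain ⟨u, x, rfl⟩ := (List.eq_nil_or_concat' u).resolve_left (by rintro rfl; simp at hu)
      obtain ⟨v, y, rfl⟩ := (List.eq_nil_or_concat' v).resolve_left (by rintro rfl; simp at hv)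
      have hu' : u.length = n := by simpa using hu
      have hv' : v.length = n := by simpa using hv
      obtain ⟨m, hm⟩ := ih u v hu' hv'
      obtain ⟨b, hb⟩ := (h n).exists_left_inv
      set z := x + ∑ i ∈ Finset.range m, c ((act c)^[i] u) with hz
      have hq := sph_mul_sum (act c) c v _ (Function.iterate_minimalPeriod) ((y - z) * b).val
      refine ⟨Function.minimalPeriod (act c) v * ((y - z) * b).val + m, ?_⟩
      rw [Function.iterate_add_apply, hit u, hm, ← hz, hit, hq.1, hq.2, hsum n ih v hv',
        nsmul_eq_mul, ZMod.natCast_zmod_val, mul_assoc, hb]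
      simp
end

section
/- Let k ≥ 1 and let act be the tree action of portraits as follows: act : (List (ZMod k) → ZMod k) → List (ZMod k) → List (ZMod k) is the unique function satisfying act c [] = [] and act c (a :: u) = (a + c []) :: act (fun w => c (a :: w)) u. Suppose c, c' : List (ZMod k) → ZMod k are two portraits, each spherically transitive (for every n and all lists u, v of length n over ZMod k there exists m with (act c)^[m] u = v, and likewise for c'). Then there exists a portrait d : List (ZMod k) → ZMod k with act d (act c u) = act c' (act d u) for all lists u (i.e. c and c' are conjugate in the infinite iterated wreath product) if and only if for every n : ℕ the sum over all words w : Fin n → ZMod k of c (List.ofFn w) equals the sum over all such w of c' (List.ofFn w). -/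
/-- The cohomological equation over a finite cyclic permutation. -/
lemma exists_coboundary {α M : Type*} [Fintype α] [AddCommGroup M] (T : α → α)
    (ht : ∀ x y, ∃ m : ℕ, T^[m] x = y) (f : α → M) (hf : ∑ x, f x = 0) :
    ∃ g : α → M, ∀ x, g (T x) = g x + f x := by
  classical
  rcases isEmpty_or_nonempty α with h | ⟨⟨x0⟩⟩
  · exact ⟨fun _ => 0, fun x => (h.false x).elim⟩
  have hpos : 0 < Function.minimalPeriod T x0 := by
    obtain ⟨m, hm⟩ := ht (T x0) x0
    apply Function.IsPeriodicPt.minimalPeriod_pos (n := m + 1) (Nat.succ_pos m)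
    show T^[m+1] x0 = x0
    rw [Function.iterate_succ_apply]; exact hm
  set p := Function.minimalPeriod T x0 with hp
  have hper : T^[p] x0 = x0 := Function.iterate_minimalPeriod
  have hinj : ∀ i j, i < p → j < p → T^[i] x0 = T^[j] x0 → i = j := by
    intro i j hi hj h
    exact Function.iterate_injOn_Iio_minimalPeriod hi hj h
  have hex : ∀ x, ∃ i, i < p ∧ T^[i] x0 = x := by
    intro x
    obtain ⟨m, hm⟩ := ht x0 x
    exact ⟨m % p, Nat.mod_lt _ hpos, by rw [hp, Function.iterate_mod_minimalPeriod_eq, hm]⟩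
  choose idx hlt hidx using hex
  have hS : ∑ j ∈ Finset.range p, f (T^[j] x0) = 0 := by
    rw [← hf]
    apply Finset.sum_bij (fun j _ => T^[j] x0)
    · simp
    · intro i hi j hj h
      exact hinj i j (Finset.mem_range.1 hi) (Finset.mem_range.1 hj) h
    · intro b _
      exact ⟨idx b, Finset.mem_range.2 (hlt b), hidx b⟩
    · simp
  refine ⟨fun x => ∑ j ∈ Finset.range (idx x), f (T^[j] x0), fun x => ?_⟩
  have h1 : ∑ j ∈ Finset.range (idx x), f (T^[j] x0) + f x
      = ∑ j ∈ Finset.range (idx x + 1), f (T^[j] x0) := by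
    rw [Finset.sum_range_succ, hidx]
  have h2 : T^[idx x + 1] x0 = T x := by rw [Function.iterate_succ_apply', hidx]
  show ∑ j ∈ Finset.range (idx (T x)), f (T^[j] x0) = _
  rw [h1]
  rcases Nat.lt_or_ge (idx x + 1) p with h | h
  · rw [hinj (idx (T x)) (idx x + 1) (hlt _) h (by rw [hidx, h2])]
  · have h3 : idx x + 1 = p := le_antisymm (hlt x) h
    have h4 : idx (T x) = 0 := hinj _ _ (hlt _) hpos (by rw [hidx, ← h2, h3, hper]; rfl)
    rw [h3, hS, h4]; simp

section
variable {k : ℕ} {act : (List (ZMod k) → ZMod k) → List (ZMod k) → List (ZMod k)}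

lemma act_length' (hnil : ∀ c, act c [] = [])
    (hcons : ∀ c a u, act c (a :: u) = (a + c []) :: act (fun w => c (a :: w)) u)
    (u : List (ZMod k)) : ∀ c, (act c u).length = u.length := by
  induction u with
  | nil => simp [hnil]
  | cons a u ih => intro c; simp [hcons, ih]

lemma act_inj' (hnil : ∀ c, act c [] = [])
    (hcons : ∀ c a u, act c (a :: u) = (a + c []) :: act (fun w => c (a :: w)) u)
    (u : List (ZMod k)) : ∀ c v, act c u = act c v → u = v := by
  induction u with
  | nil =>
    intro c v h
    cases v with
    | nil => rfl
    | cons b v => simp [hnil, hcons] at h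
  | cons a u ih =>
    intro c v h
    cases v with
    | nil => simp [hnil, hcons] at h
    | cons b v =>
      simp only [hcons, List.cons.injEq, add_left_inj] at h
      obtain ⟨rfl, h⟩ := h
      rw [ih _ _ h]

lemma act_snoc' (hnil : ∀ c, act c [] = [])
    (hcons : ∀ c a u, act c (a :: u) = (a + c []) :: act (fun w => c (a :: w)) u)
    (u : List (ZMod k)) (x : ZMod k) : ∀ c, act c (u ++ [x]) = act c u ++ [x + c u] := by
  induction u with
  | nil => simp [hnil, hcons]
  | cons a u ih => intro c; simp [hcons, ih]

lemma act_congr' (hnil : ∀ c, act c [] = [])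
    (hcons : ∀ c a u, act c (a :: u) = (a + c []) :: act (fun w => c (a :: w)) u)
    (u : List (ZMod k)) : ∀ d e : List (ZMod k) → ZMod k,
      (∀ v : List (ZMod k), v.length < u.length → d v = e v) → act d u = act e u := by
  induction u with
  | nil => simp [hnil]
  | cons a u ih =>
    intro d e h
    rw [hcons, hcons, h [] (by simp), ih _ (fun w => e (a :: w))]
    intro v hv
    exact h _ (by simpa using hv)

lemma exists_level' (hnil : ∀ c, act c [] = [])
    (hcons : ∀ c a u, act c (a :: u) = (a + c []) :: act (fun w => c (a :: w)) u)
    (d : List (ZMod k) → ZMod k) (n : ℕ) :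
    ∃ F : (Fin n → ZMod k) → (Fin n → ZMod k),
      (∀ w, List.ofFn (F w) = act d (List.ofFn w)) ∧ Function.Injective F := by
  have h : ∀ w : Fin n → ZMod k, ∃ v : Fin n → ZMod k, List.ofFn v = act d (List.ofFn w) := by
    intro w
    have hl : (act d (List.ofFn w)).length = n := by simp [act_length' hnil hcons]
    generalize act d (List.ofFn w) = l at hl
    subst hl
    exact ⟨l.get, List.ofFn_get l⟩
  choose F hF using h
  refine ⟨F, hF, fun a b hab => ?_⟩
  apply List.ofFn_injective
  apply act_inj' hnil hcons _ d
  rw [← hF, ← hF, hab]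

lemma sum_level' [NeZero k] (hnil : ∀ c, act c [] = [])
    (hcons : ∀ c a u, act c (a :: u) = (a + c []) :: act (fun w => c (a :: w)) u)
    (d f : List (ZMod k) → ZMod k) (n : ℕ) :
    ∑ w : Fin n → ZMod k, f (act d (List.ofFn w)) = ∑ w : Fin n → ZMod k, f (List.ofFn w) := by
  obtain ⟨F, hF, hi⟩ := exists_level' hnil hcons d n
  simp_rw [← hF]
  exact (Finite.injective_iff_bijective.1 hi).sum_comp (fun w => f (List.ofFn w))

lemma exists_cobdry_list' [NeZero k] (hnil : ∀ c, act c [] = [])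
    (hcons : ∀ c a u, act c (a :: u) = (a + c []) :: act (fun w => c (a :: w)) u)
    (c : List (ZMod k) → ZMod k)
    (hc : ∀ (n : ℕ) (u v : List (ZMod k)), u.length = n → v.length = n →
      ∃ m : ℕ, (act c)^[m] u = v) (n : ℕ) (f : List (ZMod k) → ZMod k) :
    ∃ g : List (ZMod k) → ZMod k, (∑ w : Fin n → ZMod k, f (List.ofFn w) = 0) →
      ∀ u, u.length = n → g (act c u) = g u + f u := by
  by_cases hf : ∑ w : Fin n → ZMod k, f (List.ofFn w) = 0
  swap
  · exact ⟨fun _ => 0, fun h => (hf h).elim⟩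
  obtain ⟨F, hF, hi⟩ := exists_level' hnil hcons c n
  have hit : ∀ m w, List.ofFn (F^[m] w) = (act c)^[m] (List.ofFn w) := by
    intro m
    induction m with
    | zero => simp
    | succ m ih => intro w; rw [Function.iterate_succ_apply, ih, hF, Function.iterate_succ_apply]
  obtain ⟨g, hg⟩ := exists_coboundary F (fun x y => by
    obtain ⟨m, hm⟩ := hc n (List.ofFn x) (List.ofFn y) (by simp) (by simp)
    exact ⟨m, List.ofFn_injective (by rw [hit, hm])⟩) (fun w => f (List.ofFn w)) hf
  obtain ⟨G, hG⟩ : ∃ G : List (ZMod k) → ZMod k, ∀ w, G (List.ofFn w) = g w :=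
    ⟨Function.extend List.ofFn g (fun _ => 0),
      fun w => List.ofFn_injective.extend_apply g _ w⟩
  refine ⟨G, fun _ u hu => ?_⟩
  subst hu
  have := hg u.get
  rw [← hG, ← hG, hF, List.ofFn_get] at this
  exact this

/-- Portraits built level by level. -/
def buildD (σ : ℕ → (List (ZMod k) → ZMod k) → (List (ZMod k) → ZMod k))
    (Φ : (List (ZMod k) → ZMod k) → (List (ZMod k) → ZMod k)) : ℕ → List (ZMod k) → ZMod k
  | 0 => fun _ => 0
  | n + 1 => fun u => if u.length = n then σ n (Φ (buildD σ Φ n)) u else buildD σ Φ n u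

lemma buildD_stable (σ : ℕ → (List (ZMod k) → ZMod k) → (List (ZMod k) → ZMod k))
    (Φ : (List (ZMod k) → ZMod k) → (List (ZMod k) → ZMod k)) (u : List (ZMod k)) (m : ℕ)
    (h : u.length + 1 ≤ m) : buildD σ Φ m u = buildD σ Φ (u.length + 1) u := by
  induction m, h using Nat.le_induction with
  | base => rfl
  | succ m hm ih =>
    rw [← ih]
    conv_lhs => rw [buildD]
    exact if_neg (by omega)

end

/-- Two spherically transitive elements of the infinite iterated wreath
product `ℤ/kℤ ≀ ℤ/kℤ ≀ ⋯`, given by their portraits, are conjugate if and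
only if all their level sums agree. -/
theorem conjugate_iff_level_sums_eq
    (k : ℕ) [NeZero k]
    (act : (List (ZMod k) → ZMod k) → List (ZMod k) → List (ZMod k))
    (hnil : ∀ c, act c [] = [])
    (hcons : ∀ c a u, act c (a :: u) = (a + c []) :: act (fun w => c (a :: w)) u)
    (c c' : List (ZMod k) → ZMod k)
    (hc : ∀ (n : ℕ) (u v : List (ZMod k)), u.length = n → v.length = n →
      ∃ m : ℕ, (act c)^[m] u = v)
    (hc' : ∀ (n : ℕ) (u v : List (ZMod k)), u.length = n → v.length = n →
      ∃ m : ℕ, (act c')^[m] u = v) :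
    (∃ d : List (ZMod k) → ZMod k, ∀ u : List (ZMod k),
        act d (act c u) = act c' (act d u)) ↔
      (∀ n : ℕ, ∑ w : Fin n → ZMod k, c (List.ofFn w) =
        ∑ w : Fin n → ZMod k, c' (List.ofFn w)) := by
  constructor
  · rintro ⟨d, hd⟩ n
    have key : ∀ u, c u + d (act c u) = d u + c' (act d u) := by
      intro u
      have h := hd (u ++ [0])
      simp only [act_snoc' hnil hcons] at h
      rw [hd u] at h
      simpa using h
    have h := Finset.sum_congr (rfl : (Finset.univ : Finset (Fin n → ZMod k)) = Finset.univ)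
      (fun w _ => key (List.ofFn w))
    rw [Finset.sum_add_distrib, Finset.sum_add_distrib, sum_level' hnil hcons,
      sum_level' hnil hcons, add_comm] at h
    exact add_left_cancel h
  · intro hs
    choose σ hσ using exists_cobdry_list' hnil hcons c hc
    set Φ : (List (ZMod k) → ZMod k) → (List (ZMod k) → ZMod k) :=
      fun e u => c' (act e u) - c u with hΦ
    set d : List (ZMod k) → ZMod k := fun u => buildD σ Φ (u.length + 1) u with hd
    have hact : ∀ u, act (buildD σ Φ u.length) u = act d u := by
      intro u
      apply act_congr' hnil hcons
      intro v hv
      exact buildD_stable σ Φ v _ hv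
    have hdσ : ∀ u, d u = σ u.length (Φ (buildD σ Φ u.length)) u := by
      intro u
      simp [hd, buildD]
    have key : ∀ u, d (act c u) = d u + (c' (act d u) - c u) := by
      intro u
      rw [hdσ, hdσ u, act_length' hnil hcons, hσ u.length _ _ u rfl, ← hact u]
      simp only [hΦ, Finset.sum_sub_distrib]
      rw [sum_level' hnil hcons, hs, sub_self]
    refine ⟨d, fun u => ?_⟩
    induction u using List.reverseRecOn with
    | nil => simp [hnil]
    | append_singleton u x ih =>
      simp only [act_snoc' hnil hcons]
      rw [ih, key]
      congr 2
      ring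
end

section
/- Let k ≥ 1, let Q be a nonempty finite set with decidable equality, δ : Q → ZMod k → Q a transition function, c : Q → ZMod k a labeling, and q₀ : Q an initial state. Let act : Q → List (ZMod k) → List (ZMod k) be the unique function satisfying act q [] = [] and act q (a :: u) = (a + c q) :: act (δ q a) u; this is the finite state automorphism of the rooted k-ary tree computed by the automaton started at q₀. Let A : Matrix Q Q (ZMod k) be the incidence matrix A q r = (|{a : ZMod k | δ q a = r}| : ZMod k) and let v = c. Then act q₀ is spherically transitive — for every n and all lists u, w of length n over ZMod k there exists m with (act q₀)^[m] u = w — if and only if ((A^j).mulVec v) q₀ is a unit of ZMod k for every j ≤ k^(Fintype.card Q). -/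
namespace FSST

/-- The finset of words of length `n`. -/
def W (k : ℕ) [NeZero k] : ℕ → Finset (List (ZMod k))
  | 0 => {[]}
  | n + 1 => (Finset.univ ×ˢ W k n).image fun x : ZMod k × List (ZMod k) => x.1 :: x.2

lemma mem_W (k : ℕ) [NeZero k] (n : ℕ) (u : List (ZMod k)) : u ∈ W k n ↔ u.length = n := by
  induction n generalizing u with
  | zero => simp [W]
  | succ n ih => cases u <;> simp [W, ih]

variable {k : ℕ} [NeZero k] {Q : Type*} [Fintype Q] [DecidableEq Q]
  {δ : Q → ZMod k → Q} {c : Q → ZMod k}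
  {act : Q → List (ZMod k) → List (ZMod k)}

lemma sum_W (A : Matrix Q Q (ZMod k))
    (hA : ∀ q r, A q r = ((Finset.univ.filter fun a : ZMod k => δ q a = r).card : ZMod k))
    (n : ℕ) (q : Q) : ∑ u ∈ W k n, c (u.foldl δ q) = ((A ^ n).mulVec c) q := by
  induction n generalizing q with
  | zero => simp [W]
  | succ n ih =>
    rw [W, Finset.sum_image, Finset.sum_product]
    · simp only [List.foldl_cons, ih]
      rw [pow_succ', ← Matrix.mulVec_mulVec]
      generalize (A ^ n).mulVec c = g
      simp only [Matrix.mulVec, dotProduct, hA]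
      rw [← Finset.sum_fiberwise (s := Finset.univ) (g := fun a => δ q a)]
      refine Finset.sum_congr rfl fun r _ => ?_
      rw [Finset.sum_congr rfl (g := fun _ => g r)]
      · simp
      · intro a ha
        rw [(Finset.mem_filter.1 ha).2]
    · rintro ⟨a, u⟩ _ ⟨b, w⟩ _ h
      simpa using h

lemma act_length (hnil : ∀ q, act q [] = [])
    (hcons : ∀ q a u, act q (a :: u) = (a + c q) :: act (δ q a) u) (q : Q)
    (u : List (ZMod k)) : (act q u).length = u.length := by
  induction u generalizing q with
  | nil => simp [hnil]
  | cons a u ih => simp [hcons, ih]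

lemma iter_length (hnil : ∀ q, act q [] = [])
    (hcons : ∀ q a u, act q (a :: u) = (a + c q) :: act (δ q a) u) (q : Q)
    (m : ℕ) (u : List (ZMod k)) : ((act q)^[m] u).length = u.length := by
  induction m with
  | zero => rfl
  | succ m ih => rw [Function.iterate_succ_apply', act_length hnil hcons, ih]

lemma act_append (hnil : ∀ q, act q [] = [])
    (hcons : ∀ q a u, act q (a :: u) = (a + c q) :: act (δ q a) u) (q : Q)
    (u : List (ZMod k)) (a : ZMod k) :
    act q (u ++ [a]) = act q u ++ [a + c (u.foldl δ q)] := by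
  induction u generalizing q with
  | nil => simp [hnil, hcons]
  | cons b u ih => simp [hcons, ih]

lemma iter_append (hnil : ∀ q, act q [] = [])
    (hcons : ∀ q a u, act q (a :: u) = (a + c q) :: act (δ q a) u) (q : Q)
    (m : ℕ) (u : List (ZMod k)) (a : ZMod k) :
    (act q)^[m] (u ++ [a]) = (act q)^[m] u ++
      [a + ∑ i ∈ Finset.range m, c (((act q)^[i] u).foldl δ q)] := by
  induction m with
  | zero => simp
  | succ m ih =>
    rw [Function.iterate_succ_apply', ih, act_append hnil hcons, Finset.sum_range_succ,
      Function.iterate_succ_apply', add_assoc]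

/-- Transitivity on level `n`. -/
def T (f : List (ZMod k) → List (ZMod k)) (n : ℕ) : Prop :=
  ∀ u w : List (ZMod k), u.length = n → w.length = n → ∃ m : ℕ, f^[m] u = w

lemma iter_period (hnil : ∀ q, act q [] = [])
    (hcons : ∀ q a u, act q (a :: u) = (a + c q) :: act (δ q a) u) (q : Q)
    (n : ℕ) (hT : T (act q) n) (u : List (ZMod k)) (hu : u.length = n) (t : ℕ) (a : ZMod k) :
    (act q)^[Function.minimalPeriod (act q) u * t] (u ++ [a]) =
      u ++ [a + t * ∑ w ∈ W k n, c (w.foldl δ q)] := by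
  set p := Function.minimalPeriod (act q) u with hp
  have hper : u ∈ Function.periodicPts (act q) := by
    obtain ⟨m, hm⟩ := hT (act q u) u (by rw [act_length hnil hcons, hu]) hu
    exact ⟨m + 1, Nat.succ_pos m, by
      rw [Function.IsPeriodicPt, Function.IsFixedPt, Function.iterate_succ_apply, hm]⟩
  have hpos : 0 < p := Function.minimalPeriod_pos_of_mem_periodicPts hper
  have hW : W k n = (Finset.range p).image fun i => (act q)^[i] u := by
    ext w
    rw [mem_W, Finset.mem_image]
    constructor
    · intro hw
      obtain ⟨m, hm⟩ := hT u w hu hw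
      exact ⟨m % p, Finset.mem_range.2 (Nat.mod_lt _ hpos), by
        rw [hp, Function.iterate_mod_minimalPeriod_eq, hm]⟩
    · rintro ⟨i, _, rfl⟩
      rw [iter_length hnil hcons, hu]
  have hS : ∑ w ∈ W k n, c (w.foldl δ q) =
      ∑ i ∈ Finset.range p, c (((act q)^[i] u).foldl δ q) := by
    rw [hW, Finset.sum_image]
    intro i hi j hj h
    exact Function.iterate_injOn_Iio_minimalPeriod (by simpa using hi) (by simpa using hj) h
  induction t with
  | zero => simp
  | succ t ih =>
    rw [Nat.mul_succ, Nat.add_comm, Function.iterate_add_apply, ih, iter_append hnil hcons, ← hS,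
      hp, Function.iterate_minimalPeriod]
    push_cast
    ring_nf

lemma T_zero (f : List (ZMod k) → List (ZMod k)) : T f 0 := by
  intro u w hu hw
  exact ⟨0, by simp_all⟩

lemma exists_append {n : ℕ} (u : List (ZMod k)) (hu : u.length = n + 1) :
    ∃ u' a, u'.length = n ∧ u = u' ++ [a] := by
  have h : u ≠ [] := by rintro rfl; simp at hu
  exact ⟨u.dropLast, u.getLast h, by simp [hu], (List.dropLast_append_getLast h).symm⟩

lemma T_succ (hnil : ∀ q, act q [] = [])
    (hcons : ∀ q a u, act q (a :: u) = (a + c q) :: act (δ q a) u) (q : Q)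
    (n : ℕ) (hT : T (act q) n) :
    T (act q) (n + 1) ↔ IsUnit (∑ w ∈ W k n, c (w.foldl δ q)) := by
  constructor
  · intro h
    let u : List (ZMod k) := List.replicate n 0
    have hu : u.length = n := by simp [u]
    obtain ⟨m, hm⟩ := h (u ++ [0]) (u ++ [1]) (by simp [hu]) (by simp [hu])
    have h1 : (act q)^[m] u = u := by
      rw [iter_append hnil hcons] at hm
      exact (List.append_inj hm (iter_length hnil hcons _ _ _)).1
    obtain ⟨t, rfl⟩ := Function.IsPeriodicPt.minimalPeriod_dvd (f := act q) (x := u) h1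
    rw [iter_period hnil hcons q n hT u hu] at hm
    have h2 := List.append_cancel_left hm
    simp only [zero_add, List.cons.injEq, and_true] at h2
    exact IsUnit.of_mul_eq_one _ (by rw [mul_comm]; exact h2)
  · intro hS u w hu hw
    obtain ⟨u, a, hu1, rfl⟩ := exists_append u hu
    obtain ⟨w, b, hw1, rfl⟩ := exists_append w hw
    obtain ⟨m, hm⟩ := hT u w hu1 hw1
    obtain ⟨s, hs⟩ := hS.exists_left_inv
    set a' := a + ∑ i ∈ Finset.range m, c (((act q)^[i] u).foldl δ q) with ha'
    refine ⟨Function.minimalPeriod (act q) w * ((b - a') * s).val + m, ?_⟩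
    rw [Function.iterate_add_apply, iter_append hnil hcons, hm,
      iter_period hnil hcons q n hT w hw1, ← ha', ZMod.natCast_zmod_val, mul_assoc, hs]
    simp

/-- Every vector `A ^ j v` already occurs among the first `k ^ |Q| + 1` ones. -/
lemma exists_le (A : Matrix Q Q (ZMod k)) (v : Q → ZMod k) (n : ℕ) :
    ∃ j ≤ k ^ Fintype.card Q, (A ^ j).mulVec v = (A ^ n).mulVec v := by
  induction n using Nat.strong_induction_on with
  | _ n ih =>
    by_cases hn : n ≤ k ^ Fintype.card Q
    · exact ⟨n, hn, rfl⟩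
    · obtain ⟨x, y, hxy, h⟩ := Fintype.exists_ne_map_eq_of_card_lt
        (fun i : Fin (k ^ Fintype.card Q + 1) => (A ^ (i : ℕ)).mulVec v) (by simp [ZMod.card])
      wlog hlt : x < y generalizing x y
      · exact this y x hxy.symm h.symm (lt_of_le_of_ne (not_lt.1 hlt) hxy.symm)
      have hlt' : (x : ℕ) < y := hlt
      have hy := y.2
      obtain ⟨j, hj, hj'⟩ := ih (n - y + x) (by omega)
      refine ⟨j, hj, hj'.trans ?_⟩
      have e : n = (n - y) + y := by omega
      conv_rhs => rw [e]
      rw [pow_add, pow_add, ← Matrix.mulVec_mulVec, ← Matrix.mulVec_mulVec]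
      exact congrArg _ h

end FSST

/-- A finite state element of the infinite iterated wreath product
`ℤ/kℤ ≀ ℤ/kℤ ≀ ⋯`, computed by a finite invertible automaton, is spherically
transitive if and only if the coefficients `((A ^ j).mulVec v) q₀` are units
of `ZMod k` for all `j ≤ k ^ (card Q)`. -/
theorem finite_state_spherically_transitive_iff
    (k : ℕ) [NeZero k]
    (Q : Type*) [Fintype Q] [DecidableEq Q] [Nonempty Q]
    (δ : Q → ZMod k → Q) (c : Q → ZMod k) (q₀ : Q)
    (act : Q → List (ZMod k) → List (ZMod k))
    (hnil : ∀ q, act q [] = [])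
    (hcons : ∀ q a u, act q (a :: u) = (a + c q) :: act (δ q a) u)
    (A : Matrix Q Q (ZMod k))
    (hA : ∀ q r, A q r = ((Finset.univ.filter fun a : ZMod k => δ q a = r).card : ZMod k))
    (v : Q → ZMod k) (hv : v = c) :
    (∀ (n : ℕ) (u w : List (ZMod k)), u.length = n → w.length = n →
        ∃ m : ℕ, (act q₀)^[m] u = w) ↔
      (∀ j ≤ k ^ Fintype.card Q, IsUnit (((A ^ j).mulVec v) q₀)) := by
  subst hv
  have key := fun n => FSST.sum_W (c := v) A hA n q₀
  constructor
  · intro h j _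
    have hT : ∀ n, FSST.T (act q₀) n := fun n u w => h n u w
    rw [← key]
    exact (FSST.T_succ hnil hcons q₀ j (hT j)).1 (hT (j + 1))
  · intro h
    suffices hT : ∀ n, FSST.T (act q₀) n from fun n u w => hT n u w
    intro n
    induction n with
    | zero => exact FSST.T_zero _
    | succ n ih =>
      rw [FSST.T_succ hnil hcons q₀ n ih, key]
      obtain ⟨j, hj, e⟩ := FSST.exists_le A v n
      rw [← e]
      exact h j hj
end

section
/- Let k ≥ 1. Let (Q₁, δ₁, c₁, q₁) and (Q₂, δ₂, c₂, q₂) be two finite invertible automata over ℤ/kℤ: Q₁, Q₂ are finite sets with decidable equality, δᵢ : Qᵢ → ZMod k → Qᵢ, cᵢ : Qᵢ → ZMod k, and qᵢ are initial states. Let actᵢ : Qᵢ → List (ZMod k) → List (ZMod k) satisfy actᵢ q [] = [] and actᵢ q (a :: u) = (a + cᵢ q) :: actᵢ (δᵢ q a) u, and let actP : (List (ZMod k) → ZMod k) → List (ZMod k) → List (ZMod k) satisfy actP d [] = [] and actP d (a :: u) = (a + d []) :: actP (fun w => d (a :: w)) u. Assume act₁ q₁ and act₂ q₂ are both spherically transitive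 (for every n and all lists u, w of length n there exists m with (actᵢ qᵢ)^[m] u = w). Let Aᵢ be the incidence matrix of the i-th automaton over ZMod k and vᵢ = cᵢ. Then there exists a portrait d : List (ZMod k) → ZMod k with actP d (act₁ q₁ u) = act₂ q₂ (actP d u) for all lists u (i.e. the two automorphisms are conjugate in the infinite iterated wreath product) if and only if ((A₁^j).mulVec v₁) q₁ = ((A₂^j).mulVec v₂) q₂ for every j ≤ k^(Fintype.card Q₁ + Fintype.card Q₂). -/
namespace FSC

/-- action of a portrait on words -/
def pact {k : ℕ} : (List (ZMod k) → ZMod k) → List (ZMod k) → List (ZMod k)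
  | _, [] => []
  | d, a :: u => (a + d []) :: pact (fun w => d (a :: w)) u

/-- the words of length `n` -/
def W (k : ℕ) [NeZero k] : ℕ → Finset (List (ZMod k))
  | 0 => {[]}
  | n + 1 => (Finset.univ ×ˢ W k n).image (fun p => p.1 :: p.2)

theorem mem_W (k : ℕ) [NeZero k] (n : ℕ) (u : List (ZMod k)) : u ∈ W k n ↔ u.length = n := by
  induction n generalizing u with
  | zero => simp [W, List.length_eq_zero_iff]
  | succ n ih =>
    cases u with
    | nil => simp [W]
    | cons a u => simp [W, ih]

theorem sum_W_succ (k : ℕ) [NeZero k] (n : ℕ) (f : List (ZMod k) → ZMod k) :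
    ∑ u ∈ W k (n + 1), f u = ∑ a, ∑ u ∈ W k n, f (a :: u) := by
  rw [W, Finset.sum_image, Finset.sum_product]
  rintro ⟨a, u⟩ _ ⟨b, w⟩ _ h
  simpa using h

theorem length_pact {k : ℕ} (d : List (ZMod k) → ZMod k) (u : List (ZMod k)) :
    (pact d u).length = u.length := by
  induction u generalizing d with
  | nil => rfl
  | cons a u ih => simp [pact, ih]

theorem pact_inj {k : ℕ} (d : List (ZMod k) → ZMod k) : Function.Injective (pact d) := by
  intro u
  induction u generalizing d with
  | nil =>
    intro w h
    cases w with
    | nil => rfl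
    | cons b w => simp [pact] at h
  | cons a u ih =>
    intro w h
    cases w with
    | nil => simp [pact] at h
    | cons b w =>
      simp only [pact, List.cons.injEq, add_left_inj] at h
      obtain ⟨rfl, h⟩ := h
      rw [ih _ h]

theorem pact_snoc {k : ℕ} (d : List (ZMod k) → ZMod k) (u : List (ZMod k)) (a : ZMod k) :
    pact d (u ++ [a]) = pact d u ++ [a + d u] := by
  induction u generalizing d with
  | nil => rfl
  | cons b u ih => simp [pact, ih]

theorem pact_congr {k : ℕ} (d e : List (ZMod k) → ZMod k) (u : List (ZMod k))
    (h : ∀ w : List (ZMod k), w.length < u.length → d w = e w) : pact d u = pact e u := by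
  induction u generalizing d e with
  | nil => rfl
  | cons b u ih =>
    simp only [pact]
    rw [h [] (by simp), ih (fun w => d (b :: w)) (fun w => e (b :: w))]
    intro w hw
    exact h _ (by simpa using hw)

theorem sum_pact (k : ℕ) [NeZero k] (n : ℕ) (d f : List (ZMod k) → ZMod k) :
    ∑ u ∈ W k n, f (pact d u) = ∑ u ∈ W k n, f u := by
  have h : (W k n).image (pact d) = W k n := by
    apply Finset.eq_of_subset_of_card_le
    · intro u hu
      obtain ⟨w, hw, rfl⟩ := Finset.mem_image.1 hu
      rw [mem_W] at hw ⊢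
      rw [length_pact, hw]
    · rw [Finset.card_image_of_injective _ (pact_inj d)]
  conv_rhs => rw [← h]
  rw [Finset.sum_image (pact_inj d).injOn]

/-- solving the coboundary equation on a single finite cycle -/
theorem coboundary {α G : Type*} [AddCommGroup G] (s : Finset α) (u0 : α) (h0 : u0 ∈ s)
    (T : α → α) (hT : Function.Injective T) (hs : ∀ u ∈ s, T u ∈ s)
    (htr : ∀ u ∈ s, ∃ m : ℕ, T^[m] u0 = u) (f : α → G) (hf : ∑ u ∈ s, f u = 0) :
    ∃ d : α → G, ∀ u ∈ s, d (T u) = d u + f u := by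
  classical
  let M : α → ℕ := fun u => if h : ∃ m : ℕ, T^[m] u0 = u then Nat.find h else 0
  have hM : ∀ u ∈ s, T^[M u] u0 = u := by
    intro u hu
    have h := htr u hu
    simp only [M, dif_pos h]
    exact Nat.find_spec h
  have hmin : ∀ u (m : ℕ), T^[m] u0 = u → M u ≤ m := by
    intro u m hm
    have h : ∃ m : ℕ, T^[m] u0 = u := ⟨m, hm⟩
    simp only [M, dif_pos h]
    exact Nat.find_min' h hm
  have hmem : ∀ i : ℕ, T^[i] u0 ∈ s := by
    intro i
    induction i with
    | zero => exact h0
    | succ i ih => rw [Function.iterate_succ_apply']; exact hs _ ih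
  refine ⟨fun u => ∑ i ∈ Finset.range (M u), f (T^[i] u0), ?_⟩
  intro u hu
  have hstep : (∑ i ∈ Finset.range (M u), f (T^[i] u0)) + f u
      = ∑ i ∈ Finset.range (M u + 1), f (T^[i] u0) := by
    rw [Finset.sum_range_succ, hM u hu]
  show (∑ i ∈ Finset.range (M (T u)), f (T^[i] u0)) = (∑ i ∈ Finset.range (M u), f (T^[i] u0)) + f u
  rw [hstep]
  have hMu1 : T^[M u + 1] u0 = T u := by
    rw [Function.iterate_succ_apply', hM u hu]
  by_cases hc : T u = u0
  · have hz : M (T u) = 0 := Nat.le_zero.1 (hmin _ 0 hc.symm)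
    rw [hz, Finset.sum_range_zero, ← hf]
    symm
    have hper : Function.IsPeriodicPt T (M u + 1) u0 := by
      show T^[M u + 1] u0 = u0
      rw [hMu1, hc]
    refine Finset.sum_bij (fun i _ => T^[i] u0) (fun i _ => hmem i) ?_ ?_ (fun _ _ => rfl)
    · have key : ∀ i j : ℕ, i < j → j < M u + 1 → T^[i] u0 ≠ T^[j] u0 := by
        intro i j hij hj he
        have h1 : T^[M u - j + i] u0 = u := by
          rw [Function.iterate_add_apply, he, ← Function.iterate_add_apply]
          rw [show M u - j + j = M u by omega]
          exact hM u hu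
        have := hmin u _ h1
        omega
      intro i hi j hj he
      rw [Finset.mem_range] at hi hj
      rcases lt_trichotomy i j with h | h | h
      · exact absurd he (key i j h hj)
      · exact h
      · exact absurd he.symm (key j i h hi)
    · intro w hw
      obtain ⟨m, hm⟩ := htr w hw
      refine ⟨m % (M u + 1), Finset.mem_range.2 (Nat.mod_lt _ (Nat.succ_pos _)), ?_⟩
      rw [hper.iterate_mod_apply, hm]
  · have : M (T u) = M u + 1 := by
      apply le_antisymm (hmin _ _ hMu1)
      have h2 := hM (T u) (hs u hu)
      rcases hm : M (T u) with _ | m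
      · rw [hm] at h2
        exact absurd h2.symm hc
      · rw [hm, Function.iterate_succ_apply'] at h2
        have := hmin u m (hT h2)
        omega
    rw [this]

theorem conj_of_sums (k : ℕ) [NeZero k] (e₁ e₂ : List (ZMod k) → ZMod k)
    (h₁ : ∀ (n : ℕ) (u w : List (ZMod k)), u.length = n → w.length = n →
      ∃ m : ℕ, (pact e₁)^[m] u = w)
    (hs : ∀ n, ∑ u ∈ W k n, e₁ u = ∑ u ∈ W k n, e₂ u) :
    ∃ d : List (ZMod k) → ZMod k, ∀ u, pact d (pact e₁ u) = pact e₂ (pact d u) := by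
  have step : ∀ (n : ℕ) (d : List (ZMod k) → ZMod k), ∃ d' : List (ZMod k) → ZMod k,
      (∀ u : List (ZMod k), u.length < n → d' u = d u) ∧
      (∀ u : List (ZMod k), u.length = n → d' (pact e₁ u) + e₁ u = e₂ (pact d u) + d' u) := by
    intro n d
    have h0 : List.replicate n (0 : ZMod k) ∈ W k n := by simp [mem_W]
    obtain ⟨g, hg⟩ := coboundary (W k n) _ h0 (pact e₁) (pact_inj e₁)
      (by intro u hu; rw [mem_W] at hu ⊢; rw [length_pact, hu])
      (by intro u hu; rw [mem_W] at hu h0; exact h₁ n _ _ h0 hu)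
      (fun u => e₂ (pact d u) - e₁ u)
      (by rw [Finset.sum_sub_distrib, sum_pact, hs, sub_self])
    refine ⟨fun u => if u.length < n then d u else g u, fun u hu => by simp [hu], ?_⟩
    intro u hu
    have := hg u ((mem_W k n u).2 hu)
    simp [length_pact, hu, this]
    ring
  choose F hF1 hF2 using step
  let D : ℕ → List (ZMod k) → ZMod k := fun n => Nat.rec (fun _ => 0) (fun n d => F n d) n
  have hD : ∀ n, D (n + 1) = F n (D n) := fun n => rfl
  have hstab : ∀ (m n : ℕ) (u : List (ZMod k)), u.length < n → D (n + m) u = D n u := by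
    intro m n u hu
    induction m with
    | zero => rfl
    | succ m ih =>
      rw [← add_assoc, hD, hF1 _ _ _ (by omega), ih]
  let d : List (ZMod k) → ZMod k := fun u => D (u.length + 1) u
  have hd : ∀ (n : ℕ) (u : List (ZMod k)), u.length < n → d u = D n u := by
    intro n u hu
    obtain ⟨m, rfl⟩ := Nat.exists_eq_add_of_le (show u.length + 1 ≤ n from hu)
    exact (hstab m _ u (Nat.lt_succ_self _)).symm
  refine ⟨d, fun u => ?_⟩
  induction u using List.reverseRecOn with
  | nil => rfl
  | append_singleton u a ih =>
    have h := hF2 u.length (D u.length) u rfl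
    rw [← hD, ← hd (u.length + 1) (pact e₁ u) (by simp [length_pact]), ← hd (u.length + 1) u (by simp),
      ← pact_congr d (D u.length) u (fun w hw => hd _ w hw)] at h
    simp only [pact_snoc]
    rw [ih]
    congr 2
    rw [add_assoc, add_comm (e₁ u), h]
    ring

theorem sums_of_conj (k : ℕ) [NeZero k] (e₁ e₂ d : List (ZMod k) → ZMod k)
    (h : ∀ u, pact d (pact e₁ u) = pact e₂ (pact d u)) (n : ℕ) :
    ∑ u ∈ W k n, e₁ u = ∑ u ∈ W k n, e₂ u := by
  have key : ∀ u, e₁ u + d (pact e₁ u) = d u + e₂ (pact d u) := by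
    intro u
    have h1 := h (u ++ [0])
    simp only [pact_snoc] at h1
    rw [h u] at h1
    simpa using h1
  have := Finset.sum_congr (rfl : W k n = W k n) (fun u _ => key u)
  rw [Finset.sum_add_distrib, Finset.sum_add_distrib, sum_pact, sum_pact, add_comm] at this
  exact add_left_cancel this

theorem act_eq {k : ℕ} {Q : Type*} (δ : Q → ZMod k → Q) (c : Q → ZMod k)
    (act : Q → List (ZMod k) → List (ZMod k))
    (hnil : ∀ q, act q [] = [])
    (hcons : ∀ q a u, act q (a :: u) = (a + c q) :: act (δ q a) u) (q : Q) :
    act q = pact (fun w => c (w.foldl δ q)) := by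
  funext u
  induction u generalizing q with
  | nil => rw [hnil]; rfl
  | cons a u ih => rw [hcons, ih]; rfl

theorem pow_sum (k : ℕ) [NeZero k] {Q : Type*} [Fintype Q] [DecidableEq Q]
    (δ : Q → ZMod k → Q) (c : Q → ZMod k) (A : Matrix Q Q (ZMod k))
    (hA : ∀ q r, A q r = ((Finset.univ.filter fun a : ZMod k => δ q a = r).card : ZMod k))
    (n : ℕ) (q : Q) :
    ((A ^ n).mulVec c) q = ∑ u ∈ W k n, c (u.foldl δ q) := by
  induction n generalizing q with
  | zero => simp [W]
  | succ n ih =>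
    rw [pow_succ', ← Matrix.mulVec_mulVec, sum_W_succ]
    simp only [Matrix.mulVec, dotProduct] at ih ⊢
    simp only [ih, hA, List.foldl_cons]
    simp only [Finset.card_filter, Nat.cast_sum, Finset.sum_mul]
    rw [Finset.sum_comm]
    refine Finset.sum_congr rfl fun a _ => ?_
    simp

/-- pigeonhole: agreement up to the bound gives agreement everywhere -/
theorem all_of_bounded (k : ℕ) [NeZero k] {Q₁ Q₂ : Type*} [Fintype Q₁] [DecidableEq Q₁]
    [Fintype Q₂] [DecidableEq Q₂] (A₁ : Matrix Q₁ Q₁ (ZMod k)) (A₂ : Matrix Q₂ Q₂ (ZMod k))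
    (v₁ : Q₁ → ZMod k) (v₂ : Q₂ → ZMod k) (q₁ : Q₁) (q₂ : Q₂)
    (h : ∀ j ≤ k ^ (Fintype.card Q₁ + Fintype.card Q₂),
        ((A₁ ^ j).mulVec v₁) q₁ = ((A₂ ^ j).mulVec v₂) q₂) (n : ℕ) :
    ((A₁ ^ n).mulVec v₁) q₁ = ((A₂ ^ n).mulVec v₂) q₂ := by
  set N := k ^ (Fintype.card Q₁ + Fintype.card Q₂) with hN
  let g : ℕ → (Q₁ → ZMod k) × (Q₂ → ZMod k) :=
    fun j => ((A₁ ^ j).mulVec v₁, (A₂ ^ j).mulVec v₂)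
  have hcard : Fintype.card ((Q₁ → ZMod k) × (Q₂ → ZMod k)) = N := by
    simp [Fintype.card_prod, ZMod.card, hN, pow_add]
  obtain ⟨x, y, hxy, hgxy⟩ := Fintype.exists_ne_map_eq_of_card_lt
    (fun j : Fin (N + 1) => g j) (by simp [hcard])
  obtain ⟨i, j, hij, hj, hg⟩ : ∃ i j : ℕ, i < j ∧ j ≤ N ∧ g i = g j := by
    rcases lt_or_gt_of_ne hxy with hlt | hlt
    · exact ⟨x, y, hlt, Nat.lt_succ_iff.1 y.2, hgxy⟩
    · exact ⟨y, x, hlt, Nat.lt_succ_iff.1 x.2, hgxy.symm⟩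
  have hshift : ∀ m, g (m + i) = g (m + j) := by
    intro m
    have h1 := congrArg Prod.fst hg
    have h2 := congrArg Prod.snd hg
    simp only [g] at h1 h2 ⊢
    simp only [pow_add, ← Matrix.mulVec_mulVec, h1, h2]
  have hall : ∀ n, ∃ m ≤ N, g n = g m := by
    intro n
    induction n using Nat.strong_induction_on with
    | _ n ih =>
      by_cases hn : n ≤ N
      · exact ⟨n, hn, rfl⟩
      · obtain ⟨m, hm, hgm⟩ := ih (n - j + i) (by omega)
        refine ⟨m, hm, ?_⟩
        rw [← hgm, hshift, show n - j + j = n by omega]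
  obtain ⟨m, hm, hgm⟩ := hall n
  have h1 := congrFun (congrArg Prod.fst hgm) q₁
  have h2 := congrFun (congrArg Prod.snd hgm) q₂
  simp only [g] at h1 h2
  rw [h1, h2, h m hm]

end FSC

/-- Two spherically transitive finite state elements of the infinite iterated
wreath product `ℤ/kℤ ≀ ℤ/kℤ ≀ ⋯`, computed by finite invertible automata, are
conjugate if and only if the coefficients `((Aᵢ ^ j).mulVec vᵢ) qᵢ` agree for
all `j ≤ k ^ (card Q₁ + card Q₂)`. -/
theorem finite_state_conjugate_iff
    (k : ℕ) [NeZero k]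
    (Q₁ Q₂ : Type*) [Fintype Q₁] [DecidableEq Q₁] [Fintype Q₂] [DecidableEq Q₂]
    (δ₁ : Q₁ → ZMod k → Q₁) (δ₂ : Q₂ → ZMod k → Q₂)
    (c₁ : Q₁ → ZMod k) (c₂ : Q₂ → ZMod k) (q₁ : Q₁) (q₂ : Q₂)
    (act₁ : Q₁ → List (ZMod k) → List (ZMod k))
    (act₂ : Q₂ → List (ZMod k) → List (ZMod k))
    (hnil₁ : ∀ q, act₁ q [] = [])
    (hcons₁ : ∀ q a u, act₁ q (a :: u) = (a + c₁ q) :: act₁ (δ₁ q a) u)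
    (hnil₂ : ∀ q, act₂ q [] = [])
    (hcons₂ : ∀ q a u, act₂ q (a :: u) = (a + c₂ q) :: act₂ (δ₂ q a) u)
    (actP : (List (ZMod k) → ZMod k) → List (ZMod k) → List (ZMod k))
    (hPnil : ∀ d, actP d [] = [])
    (hPcons : ∀ d a u, actP d (a :: u) = (a + d []) :: actP (fun w => d (a :: w)) u)
    (h₁ : ∀ (n : ℕ) (u w : List (ZMod k)), u.length = n → w.length = n →
      ∃ m : ℕ, (act₁ q₁)^[m] u = w)
    (h₂ : ∀ (n : ℕ) (u w : List (ZMod k)), u.length = n → w.length = n →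
      ∃ m : ℕ, (act₂ q₂)^[m] u = w)
    (A₁ : Matrix Q₁ Q₁ (ZMod k))
    (hA₁ : ∀ q r, A₁ q r = ((Finset.univ.filter fun a : ZMod k => δ₁ q a = r).card : ZMod k))
    (A₂ : Matrix Q₂ Q₂ (ZMod k))
    (hA₂ : ∀ q r, A₂ q r = ((Finset.univ.filter fun a : ZMod k => δ₂ q a = r).card : ZMod k))
    (v₁ : Q₁ → ZMod k) (hv₁ : v₁ = c₁)
    (v₂ : Q₂ → ZMod k) (hv₂ : v₂ = c₂) :
    (∃ d : List (ZMod k) → ZMod k, ∀ u : List (ZMod k),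
        actP d (act₁ q₁ u) = act₂ q₂ (actP d u)) ↔
      (∀ j ≤ k ^ (Fintype.card Q₁ + Fintype.card Q₂),
        ((A₁ ^ j).mulVec v₁) q₁ = ((A₂ ^ j).mulVec v₂) q₂) := by
  have hP : actP = FSC.pact := by
    funext d u
    induction u generalizing d with
    | nil => rw [hPnil]; rfl
    | cons a u ih => rw [hPcons, ih]; rfl
  subst hP hv₁ hv₂
  rw [FSC.act_eq δ₁ v₁ act₁ hnil₁ hcons₁ q₁] at h₁ ⊢
  rw [FSC.act_eq δ₂ v₂ act₂ hnil₂ hcons₂ q₂]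
  constructor
  · rintro ⟨d, hd⟩ j _
    rw [FSC.pow_sum k δ₁ v₁ A₁ hA₁, FSC.pow_sum k δ₂ v₂ A₂ hA₂]
    exact FSC.sums_of_conj k _ _ d hd j
  · intro h
    apply FSC.conj_of_sums k _ _ h₁
    intro n
    have := FSC.all_of_bounded k A₁ A₂ v₁ v₂ q₁ q₂ h n
    rwa [FSC.pow_sum k δ₁ v₁ A₁ hA₁, FSC.pow_sum k δ₂ v₂ A₂ hA₂] at this
end

section
/- Let k ≥ 1 be a natural number and M a finite additive commutative group. Let (Q₁, δ₁, c₁, q₁) and (Q₂, δ₂, c₂, q₂) be two finite automata over the alphabet Fin k with values in M: Qᵢ are finite sets with decidable equality, δᵢ : Qᵢ → Fin k → Qᵢ, cᵢ : Qᵢ → M, and qᵢ are initial states. Then the equality of level sums ∑_{w : Fin j → Fin k} c₁ (List.foldl δ₁ q₁ (List.ofFn w)) = ∑_{w : Fin j → Fin k} c₂ (List.foldl δ₂ q₂ (List.ofFn w)) holds for every natural number j if and only if it holds for every j ≤ (Fintype.card M)^(Fintype.card Q₁ + Fintype.card Q₂). -/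
theorem level_sum_iterate {k : ℕ} {M Q : Type*} [AddCommGroup M] (δ : Q → Fin k → Q)
    (c : Q → M) (j : ℕ) (q : Q) :
    ∑ w : Fin j → Fin k, c (List.foldl δ q (List.ofFn w)) =
      (fun (f : Q → M) (p : Q) => ∑ a, f (δ p a))^[j] c q := by
  induction j generalizing q with
  | zero => simp
  | succ j ih =>
    rw [Function.iterate_succ_apply']
    simp only [← ih]
    rw [← (Fin.consEquiv (fun _ : Fin (j + 1) => Fin k)).sum_comp, Fintype.sum_prod_type]
    simp [Fin.consEquiv, List.ofFn_succ]

theorem exists_iterate_le_card {X : Type*} [Fintype X] (T : X → X) (x : X) (j : ℕ) :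
    ∃ i ≤ Fintype.card X, T^[i] x = T^[j] x := by
  induction j using Nat.strong_induction_on with
  | _ j ih =>
    by_cases hj : j ≤ Fintype.card X
    · exact ⟨j, hj, rfl⟩
    · obtain ⟨a, b, hab, h⟩ : ∃ a b : Fin (Fintype.card X + 1), a < b ∧ T^[a] x = T^[b] x := by
        obtain ⟨a, b, hne, h⟩ := Fintype.exists_ne_map_eq_of_card_lt
          (fun a : Fin (Fintype.card X + 1) => T^[a] x) (by simp)
        rcases lt_or_gt_of_ne hne with h' | h'
        · exact ⟨a, b, h', h⟩
        · exact ⟨b, a, h', h.symm⟩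
      have hb := b.2
      have hab' : (a : ℕ) < b := hab
      obtain ⟨i, hi, e⟩ := ih (j - b + a) (by omega)
      refine ⟨i, hi, e.trans ?_⟩
      rw [Function.iterate_add_apply, h, ← Function.iterate_add_apply]
      congr 2
      omega

/-- Two finite state elements of an infinite iterated wreath product have the
same image in the abelianization (all level sums agree) if and only if the
level sums agree up to `(card M) ^ (card Q₁ + card Q₂)`. -/
theorem level_sums_eq_iff_finite_check
    (k : ℕ) (hk : 1 ≤ k) (M : Type*) [AddCommGroup M] [Fintype M]
    (Q₁ Q₂ : Type*) [Fintype Q₁] [DecidableEq Q₁] [Fintype Q₂] [DecidableEq Q₂]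
    (δ₁ : Q₁ → Fin k → Q₁) (δ₂ : Q₂ → Fin k → Q₂)
    (c₁ : Q₁ → M) (c₂ : Q₂ → M) (q₁ : Q₁) (q₂ : Q₂) :
    (∀ j : ℕ, ∑ w : Fin j → Fin k, c₁ (List.foldl δ₁ q₁ (List.ofFn w)) =
        ∑ w : Fin j → Fin k, c₂ (List.foldl δ₂ q₂ (List.ofFn w))) ↔
      (∀ j ≤ Fintype.card M ^ (Fintype.card Q₁ + Fintype.card Q₂),
        ∑ w : Fin j → Fin k, c₁ (List.foldl δ₁ q₁ (List.ofFn w)) =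
          ∑ w : Fin j → Fin k, c₂ (List.foldl δ₂ q₂ (List.ofFn w))) := by
  refine ⟨fun h j _ => h j, fun h j => ?_⟩
  simp only [level_sum_iterate] at h ⊢
  set T₁ := (fun (f : Q₁ → M) (p : Q₁) => ∑ a, f (δ₁ p a))
  set T₂ := (fun (f : Q₂ → M) (p : Q₂) => ∑ a, f (δ₂ p a))
  obtain ⟨i, hi, e⟩ := exists_iterate_le_card (Prod.map T₁ T₂) (c₁, c₂) j
  rw [Prod.map_iterate, Prod.map_iterate, Prod.map_apply, Prod.map_apply, Prod.mk.injEq] at e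
  rw [← e.1, ← e.2]
  apply h
  simpa [pow_add] using hi
end

section
/- Let n be a natural number, A : Matrix (Fin n) (Fin n) (ZMod 2), v : Fin n → ZMod 2, and i : Fin n. Then ((A^j).mulVec v) i = 1 for every natural number j if and only if ((A^j).mulVec v) i = 1 for every j ≤ n + 1. -/
/-- Over `ZMod 2`, the coefficients `((A ^ j).mulVec v) i` all equal `1` if
and only if they equal `1` for `j ≤ n + 1`. -/
theorem zmod_two_coefficients_one_iff_finite_check
    (n : ℕ) (A : Matrix (Fin n) (Fin n) (ZMod 2))
    (v : Fin n → ZMod 2) (i : Fin n) :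
    (∀ j : ℕ, ((A ^ j).mulVec v) i = 1) ↔
      (∀ j ≤ n + 1, ((A ^ j).mulVec v) i = 1) := by
  refine ⟨fun h j _ => h j, fun h => ?_⟩
  have hdeg : A.charpoly.natDegree = n := by simp
  have hlead : A.charpoly.coeff n = 1 := by
    have := A.charpoly_monic.coeff_natDegree
    rwa [hdeg] at this
  -- the recurrence given by Cayley-Hamilton
  have hrec : ∀ k : ℕ, ∑ l ∈ Finset.range n,
      A.charpoly.coeff l * ((A ^ (l + k)).mulVec v) i + ((A ^ (n + k)).mulVec v) i = 0 := by
    intro k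
    have h0 := A.aeval_self_charpoly
    rw [Polynomial.aeval_eq_sum_range, hdeg] at h0
    have h1 := congrArg (fun M => ((M * A ^ k).mulVec v) i) h0
    simp only [Finset.sum_mul, Matrix.sum_mulVec, Finset.sum_apply, smul_mul_assoc, ← pow_add,
      Matrix.smul_mulVec, Pi.smul_apply, smul_eq_mul, zero_mul, Matrix.zero_mulVec,
      Pi.zero_apply] at h1
    rw [Finset.sum_range_succ, hlead, one_mul] at h1
    exact h1
  have base : ∑ l ∈ Finset.range n, A.charpoly.coeff l + 1 = 0 := by
    rw [← hrec 0, add_zero, h n (by omega)]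
    congr 1
    refine Finset.sum_congr rfl fun l hl => ?_
    rw [add_zero, h l (by have := Finset.mem_range.1 hl; omega), mul_one]
  intro j
  induction j using Nat.strong_induction_on with
  | _ j ih =>
    by_cases hj : j ≤ n + 1
    · exact h j hj
    · obtain ⟨k, rfl⟩ : ∃ k, j = n + k := ⟨j - n, by omega⟩
      have h2 := hrec k
      rw [Finset.sum_congr rfl (g := fun l => A.charpoly.coeff l) fun l hl => by
        rw [ih (l + k) (by have := Finset.mem_range.1 hl; omega), mul_one]] at h2
      exact add_left_cancel (h2.trans base.symm)
end
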